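/- Let V : ℝ → ℝ be Borel measurable, locally integrable and nonnegative almost everywhere, and let k ≥ 1. If Δ*_k(ℝ) < Σ_V, then there exists a k-partition P of ℝ realizing the infimal energy, i.e. Δ(P) = Δ*_k(ℝ). (This is the paper's Theorem 1.3 for the metric graph G = ℝ.) -/

import Mathlib

open MeasureTheory Set Filter Topology
open scoped ENNReal

/-- Rayleigh quotient of a test function `f` for the Schrödinger form with potential `V`. -/
noncomputable def rayleigh (V : ℝ → ℝ) (f : ℝ → ℝ) : ℝ :=
  (∫ x, ((deriv f x) ^ 2 + V x * (f x) ^ 2)) / (∫ x, (f x) ^ 2)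

/-- `f` is an admissible test function for the closed set `S`: continuously differentiable,
not identically zero, with compact support contained in `S`. -/
def TestFor (S : Set ℝ) (f : ℝ → ℝ) : Prop :=
  ContDiff ℝ 1 f ∧ f ≠ 0 ∧ HasCompactSupport f ∧ tsupport f ⊆ S

/-- Dirichlet ground state energy `λ_V(S)`, with `sInf ∅ = ∞`. -/
noncomputable def lambdaV (V : ℝ → ℝ) (S : Set ℝ) : ℝ≥0∞ :=
  sInf {e : ℝ≥0∞ | ∃ f : ℝ → ℝ, TestFor S f ∧ e = ENNReal.ofReal (rayleigh V f)}

/-- `Σ_V`, the infimum of the essential spectrum of `-d²/dx² + V` on `ℝ`, characterized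
Persson-style as `sup_{R>0} λ_V({|x| ≥ R})`. -/
noncomputable def SigmaV (V : ℝ → ℝ) : ℝ≥0∞ :=
  ⨆ R : ℝ, ⨆ _ : 0 < R, lambdaV V {x : ℝ | R ≤ |x|}

/-- A `k`-partition of `ℝ`: `k` closed connected subsets with nonempty interior whose
pairwise intersections are contained in both frontiers. -/
def IsPartitionR (k : ℕ) (G : Fin k → Set ℝ) : Prop :=
  (∀ i, IsClosed (G i)) ∧ (∀ i, IsConnected (G i)) ∧
    (∀ i, (interior (G i)).Nonempty) ∧
    ∀ i j, i ≠ j → G i ∩ G j ⊆ frontier (G i) ∩ frontier (G j)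

/-- The energy `Δ(P)` of a partition: the maximum of the ground state energies. -/
noncomputable def energyR (V : ℝ → ℝ) {k : ℕ} (G : Fin k → Set ℝ) : ℝ≥0∞ :=
  ⨆ i, lambdaV V (G i)

/-- The infimal `k`-partition energy `Δ*_k(ℝ)`. -/
noncomputable def optEnergyR (V : ℝ → ℝ) (k : ℕ) : ℝ≥0∞ :=
  ⨅ G : {G : Fin k → Set ℝ // IsPartitionR k G}, energyR V G.1

/-!
A closed interval of `ℝ` is given by two endpoints in `EReal`, and replacing the pieces of a
partition by their interval hulls only enlarges them. Partitions thus correspond to tuples of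
endpoint pairs whose intervals do not overlap, and these tuples form a compact set. On it the
energy, truncated at `Σ_V`, is lower semicontinuous, so it has a minimizer. As `Δ*_k < Σ_V`, the
truncation is not active at the minimum; there each ground state energy is finite, so each interval
has nonempty interior and the minimizer is a partition.

Lower semicontinuity at `+∞` or `-∞` is the definition of `Σ_V`. At a real endpoint `a` a test
function `f` for a slightly larger interval vanishes at a point near `a`, hence is small near `a`:
`f(x)² ≤ |x - p| ∫ f'²` if `f p = 0`. Soft thresholding near `a`, i.e. subtracting from `f` a clamp
of its values, turns it into a test function that vanishes near `a`. Its derivative is multiplied by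
a factor in `[0, 1]` up to an error proportional to the threshold, so its Rayleigh quotient is
arbitrarily close to that of `f`.
-/

section Order

variable {α : Type*} [LinearOrder α] [TopologicalSpace α] {A B : Set α}

lemma inter_subset_frontier_of_subset_upperBounds [OrderTopology α] [DenselyOrdered α]
    [NoMinOrder α] [NoMaxOrder α] (h : B ⊆ upperBounds A) :
    A ∩ B ⊆ frontier A ∩ frontier B := by
  rintro x ⟨hxA, hxB⟩
  have hA : A ⊆ Iic x := fun y hy => h hxB hy
  have hB : B ⊆ Ici x := fun y hy => h hy hxA
  refine ⟨⟨subset_closure hxA, fun hx => ?_⟩, subset_closure hxB, fun hx => ?_⟩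
  · simpa [interior_Iic] using interior_mono hA hx
  · simpa [interior_Ici] using interior_mono hB hx

lemma subset_upperBounds_of_disjoint_interior [OrderClosedTopology α] (hA : A.OrdConnected)
    (hB : B.OrdConnected) (h : Disjoint (interior A) B) {p q : α} (hp : p ∈ interior A)
    (hq : q ∈ B) (hpq : p < q) : B ⊆ upperBounds A := by
  intro y hy x hx
  by_contra! hyx
  have hpy : p < y := by
    by_contra! hyp
    exact disjoint_left.1 h hp (hB.out hy hq ⟨hyp, hpq.le⟩)
  have hIoo : Ioo p x ⊆ interior A := interior_maximal
    (Ioo_subset_Icc_self.trans (hA.out (interior_subset hp) hx)) isOpen_Ioo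
  exact disjoint_left.1 h (hIoo ⟨hpy, hyx⟩) hy

lemma subset_upperBounds_or_subset_lowerBounds_of_disjoint_interior [OrderClosedTopology α]
    (hA : A.OrdConnected) (hB : B.OrdConnected) (h : Disjoint (interior A) B)
    (hA₀ : (interior A).Nonempty) : B ⊆ upperBounds A ∨ B ⊆ lowerBounds A := by
  obtain ⟨p, hp⟩ := hA₀
  obtain rfl | ⟨q, hq⟩ := B.eq_empty_or_nonempty
  · exact Or.inl (empty_subset _)
  obtain hpq | rfl | hqp := lt_trichotomy p q
  · exact Or.inl (subset_upperBounds_of_disjoint_interior hA hB h hp hq hpq)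
  · exact absurd hq (disjoint_left.1 h hp)
  · exact Or.inr (subset_upperBounds_of_disjoint_interior (α := αᵒᵈ) hA.dual hB.dual h hp hq hqp)

end Order

section TestFunctions

lemma integrable_mul_sq_of_hasCompactSupport {X : Type*} [TopologicalSpace X] [T2Space X]
    [MeasurableSpace X] [OpensMeasurableSpace X] {μ : Measure X} {V f : X → ℝ}
    (hV : LocallyIntegrable V μ) (hf : Continuous f) (hfc : HasCompactSupport f) :
    Integrable (fun x => V x * f x ^ 2) μ :=
  hV.integrable_smul_right_of_hasCompactSupport (hf.pow 2)
    (hfc.comp_left (g := (· ^ 2)) (by simp))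

lemma integrable_sq_of_hasCompactSupport {X : Type*} [TopologicalSpace X]
    [MeasurableSpace X] [OpensMeasurableSpace X] {μ : Measure X} [IsFiniteMeasureOnCompacts μ]
    {f : X → ℝ} (hf : Continuous f) (hfc : HasCompactSupport f) :
    Integrable (fun x => f x ^ 2) μ :=
  (by fun_prop : Continuous fun x => f x ^ 2).integrable_of_hasCompactSupport
    (hfc.comp_left (g := fun y => y ^ 2) (zero_pow two_ne_zero))

lemma sq_intervalIntegral_le {g : ℝ → ℝ} {a b : ℝ} (hg : IntervalIntegrable g volume a b)
    (hg₂ : Integrable (fun t => g t ^ 2)) :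
    (∫ t in a..b, g t) ^ 2 ≤ |b - a| * ∫ t, g t ^ 2 := by
  obtain rfl | hab := eq_or_ne a b
  · simp
  have hvol : volume.real (uIoc a b) = |b - a| := by simp [measureReal_def]
  have hpos : 0 < |b - a| := abs_pos.2 (sub_ne_zero.2 hab.symm)
  have jensen : (⨍ t in uIoc a b, g t) ^ 2 ≤ ⨍ t in uIoc a b, g t ^ 2 :=
    (even_two.convexOn_pow (𝕜 := ℝ)).map_set_average_le (by fun_prop) isClosed_univ
      (by simpa using sub_ne_zero.2 hab.symm) (by simp) (by simp) hg.def' hg₂.integrableOn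
  rw [setAverage_eq, setAverage_eq, hvol, smul_eq_mul, smul_eq_mul, mul_pow, inv_pow,
    inv_mul_le_iff₀ (by positivity)] at jensen
  calc (∫ t in a..b, g t) ^ 2 = (∫ t in uIoc a b, g t) ^ 2 := by
        rw [← sq_abs, intervalIntegral.abs_intervalIntegral_eq, sq_abs]
    _ ≤ |b - a| ^ 2 * (|b - a|⁻¹ * ∫ t in uIoc a b, g t ^ 2) := jensen
    _ = |b - a| * ∫ t in uIoc a b, g t ^ 2 := by field_simp
    _ ≤ |b - a| * ∫ t, g t ^ 2 := mul_le_mul_of_nonneg_left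
        (setIntegral_le_integral hg₂ (ae_of_all _ fun t => sq_nonneg _)) hpos.le

lemma sq_sub_le_abs_sub_mul_integral_sq_deriv {f : ℝ → ℝ} (hf : ContDiff ℝ 1 f)
    (hf₂ : Integrable (fun t => deriv f t ^ 2)) (x y : ℝ) :
    (f y - f x) ^ 2 ≤ |y - x| * ∫ t, deriv f t ^ 2 := by
  have hint : IntervalIntegrable (deriv f) volume x y :=
    (hf.continuous_deriv le_rfl).intervalIntegrable x y
  rw [← intervalIntegral.integral_deriv_eq_sub
    (fun t _ => hf.differentiable one_ne_zero t) hint]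
  exact sq_intervalIntegral_le hint hf₂

end TestFunctions

section SoftThreshold

/-- A `C¹` clamp of the real line built from a bump function `φ` at the origin: it is the identity
where `φ = 1`, constant where `φ = 0`, and its slope is `φ` throughout. -/
noncomputable def smoothClip (φ : ContDiffBump (0 : ℝ)) (y : ℝ) : ℝ := ∫ s in (0 : ℝ)..y, φ s

variable (φ : ContDiffBump (0 : ℝ))

lemma hasDerivAt_smoothClip (y : ℝ) : HasDerivAt (smoothClip φ) (φ y) y :=
  φ.continuous.integral_hasStrictDerivAt 0 y |>.hasDerivAt

lemma contDiff_smoothClip : ContDiff ℝ 1 (smoothClip φ) :=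
  contDiff_one_iff_deriv.2 ⟨fun y => (hasDerivAt_smoothClip φ y).differentiableAt,
    (funext fun y => (hasDerivAt_smoothClip φ y).deriv) ▸ φ.continuous⟩

lemma smoothClip_eq_self_of_abs_le {y : ℝ} (hy : |y| ≤ φ.rIn) : smoothClip φ y = y := by
  have hφ : EqOn φ 1 (uIcc 0 y) := fun s hs => φ.one_of_mem_closedBall <| by
    simpa using (abs_sub_left_of_mem_uIcc hs).trans (by simpa using hy)
  rw [smoothClip, intervalIntegral.integral_congr hφ]
  simp

lemma abs_smoothClip_le (y : ℝ) : |smoothClip φ y| ≤ 2 * φ.rOut := by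
  calc |smoothClip φ y| = |∫ s in uIoc 0 y, φ s| := intervalIntegral.abs_intervalIntegral_eq _ _ _ _
    _ = ∫ s in uIoc 0 y, φ s := abs_of_nonneg (integral_nonneg fun s => φ.nonneg)
    _ ≤ ∫ s, φ s := setIntegral_le_integral φ.integrable (ae_of_all _ fun s => φ.nonneg)
    _ ≤ volume.real (Metric.closedBall (0 : ℝ) φ.rOut) := φ.integral_le_measure_closedBall volume
    _ = 2 * φ.rOut := by simp [measureReal_def, φ.rOut_pos.le]

lemma abs_sub_mul_smoothClip_le {s : ℝ} (hs : s ∈ Icc (0 : ℝ) 1) (y : ℝ) :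
    |y - s * smoothClip φ y| ≤ |y| := by
  have hφ : ∀ t ∈ uIoc 0 y, ‖1 - s * φ t‖ ≤ 1 := fun t _ => by
    rw [Real.norm_eq_abs, abs_le]
    constructor <;> nlinarith [hs.1, hs.2, φ.nonneg (x := t), φ.le_one (x := t)]
  have hint : y - s * smoothClip φ y = ∫ t in (0 : ℝ)..y, (1 - s * φ t) := by
    rw [intervalIntegral.integral_sub (by simp)
      ((φ.continuous.const_mul s).intervalIntegrable 0 y),
      intervalIntegral.integral_const_mul, smoothClip]
    simp
  simpa [hint] using intervalIntegral.norm_integral_le_of_norm_le_const hφ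

/-- Soft thresholding of `f` localized by a weight `w`: where `w = 1` the small values of `f` become
`0` and the others move towards `0` by a bounded amount, and where `w = 0` nothing changes. -/
noncomputable def softThreshold (w f : ℝ → ℝ) (x : ℝ) : ℝ := f x - w x * smoothClip φ (f x)

variable {φ} {w f : ℝ → ℝ}

lemma contDiff_softThreshold (hw : ContDiff ℝ 1 w) (hf : ContDiff ℝ 1 f) :
    ContDiff ℝ 1 (softThreshold φ w f) :=
  hf.sub (hw.mul ((contDiff_smoothClip φ).comp hf))

lemma abs_softThreshold_le {x : ℝ} (hw : w x ∈ Icc (0 : ℝ) 1) :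
    |softThreshold φ w f x| ≤ |f x| :=
  abs_sub_mul_smoothClip_le φ hw (f x)

lemma softThreshold_eq_zero {x : ℝ} (hw : w x = 1) (hf : |f x| ≤ φ.rIn) :
    softThreshold φ w f x = 0 := by
  simp [softThreshold, hw, smoothClip_eq_self_of_abs_le φ hf]

lemma tsupport_softThreshold_subset (hw : ∀ x, w x ∈ Icc (0 : ℝ) 1) :
    tsupport (softThreshold φ w f) ⊆ tsupport f :=
  closure_mono fun x hx hfx => hx <| by
    simpa [hfx] using abs_softThreshold_le (φ := φ) (f := f) (hw x)

lemma deriv_softThreshold (hw : ContDiff ℝ 1 w) (hf : ContDiff ℝ 1 f) (x : ℝ) :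
    deriv (softThreshold φ w f) x =
      (1 - w x * φ (f x)) * deriv f x - deriv w x * smoothClip φ (f x) := by
  have hf' := (hf.differentiable one_ne_zero x).hasDerivAt
  have hw' := (hw.differentiable one_ne_zero x).hasDerivAt
  have h : HasDerivAt (softThreshold φ w f) _ x :=
    hf'.sub (hw'.mul ((hasDerivAt_smoothClip φ (f x)).comp x hf'))
  rw [h.deriv]
  ring

lemma add_sq_le_of_abs_le {r u v s : ℝ} (hr : 0 < r) (hv : |v| ≤ 2 * r * |s|) :
    (u + v) ^ 2 ≤ (1 + r) * (u ^ 2 + 4 * r * s ^ 2) := by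
  have hv₂ : v ^ 2 / r ≤ 4 * r * s ^ 2 := by
    rw [div_le_iff₀ hr, ← sq_abs v, ← sq_abs s]
    calc |v| ^ 2 ≤ (2 * r * |s|) ^ 2 := by gcongr
      _ = 4 * r * |s| ^ 2 * r := by ring
  have young : (1 + r) * (u ^ 2 + v ^ 2 / r) - (u + v) ^ 2 = (r * u - v) ^ 2 / r := by
    field_simp
    ring
  calc (u + v) ^ 2 ≤ (1 + r) * (u ^ 2 + v ^ 2 / r) := by
        have : 0 ≤ (r * u - v) ^ 2 / r := by positivity
        linarith
    _ ≤ (1 + r) * (u ^ 2 + 4 * r * s ^ 2) := by gcongr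

lemma sq_le_softThreshold_sq (x : ℝ) :
    f x ^ 2 ≤ (1 + φ.rOut) * (softThreshold φ w f x ^ 2 + 4 * φ.rOut * w x ^ 2) := by
  have hv : |w x * smoothClip φ (f x)| ≤ 2 * φ.rOut * |w x| := by
    rw [abs_mul, mul_comm]
    gcongr
    exact abs_smoothClip_le φ (f x)
  simpa [softThreshold] using add_sq_le_of_abs_le (u := softThreshold φ w f x) φ.rOut_pos hv

lemma deriv_softThreshold_sq_le (hw : ContDiff ℝ 1 w) (hw₁ : ∀ x, w x ∈ Icc (0 : ℝ) 1)
    (hf : ContDiff ℝ 1 f) (x : ℝ) :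
    deriv (softThreshold φ w f) x ^ 2 ≤
      (1 + φ.rOut) * (deriv f x ^ 2 + 4 * φ.rOut * deriv w x ^ 2) := by
  have hv : |-(deriv w x * smoothClip φ (f x))| ≤ 2 * φ.rOut * |deriv w x| := by
    rw [abs_neg, abs_mul, mul_comm]
    gcongr
    exact abs_smoothClip_le φ (f x)
  have hu : ((1 - w x * φ (f x)) * deriv f x) ^ 2 ≤ deriv f x ^ 2 := by
    have h₀ : 0 ≤ w x * φ (f x) := mul_nonneg (hw₁ x).1 φ.nonneg
    have h₁ : w x * φ (f x) ≤ 1 := mul_le_one₀ (hw₁ x).2 φ.nonneg φ.le_one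
    rw [mul_pow]
    exact mul_le_of_le_one_left (sq_nonneg _) (pow_le_one₀ (by linarith) (by linarith))
  have hr := φ.rOut_pos
  rw [deriv_softThreshold hw hf, sub_eq_add_neg]
  exact (add_sq_le_of_abs_le φ.rOut_pos hv).trans (by gcongr)

lemma disjoint_tsupport_softThreshold {U : Set ℝ} (hU : IsOpen U) (hw : ∀ x ∈ U, w x = 1)
    (hf : ∀ x ∈ U, |f x| ≤ φ.rIn) : Disjoint (tsupport (softThreshold φ w f)) U :=
  disjoint_left.2 fun _ hx hxU => notMem_tsupport_iff_eventuallyEq.2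
    (eventually_of_mem (hU.mem_nhds hxU) fun y hy => softThreshold_eq_zero (hw y hy) (hf y hy)) hx

lemma integral_sq_le_softThreshold (hw : ContDiff ℝ 1 w) (hwc : HasCompactSupport w)
    (hw₁ : ∀ x, w x ∈ Icc (0 : ℝ) 1) (hf : ContDiff ℝ 1 f) (hfc : HasCompactSupport f) :
    ∫ x, f x ^ 2 ≤
      (1 + φ.rOut) * ((∫ x, softThreshold φ w f x ^ 2) + 4 * φ.rOut * ∫ x, w x ^ 2) := by
  have hgc : HasCompactSupport (softThreshold φ w f) :=
    hfc.of_isClosed_subset (isClosed_tsupport _) (tsupport_softThreshold_subset hw₁)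
  have hg₂ := integrable_sq_of_hasCompactSupport (μ := volume)
    (contDiff_softThreshold (φ := φ) hw hf).continuous hgc
  have hw₂ := (integrable_sq_of_hasCompactSupport (μ := volume) hw.continuous hwc).const_mul
    (4 * φ.rOut)
  rw [← integral_const_mul, ← integral_add hg₂ hw₂, ← integral_const_mul]
  exact integral_mono (integrable_sq_of_hasCompactSupport hf.continuous hfc)
    ((hg₂.add hw₂).const_mul _) sq_le_softThreshold_sq

end SoftThreshold

section GroundState

/-- The quadratic form `∫ f'² + V f²` of the Schrödinger operator `-d²/dx² + V`, i.e. the numerator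
of `rayleigh V f`. -/
noncomputable def schrodingerForm (V f : ℝ → ℝ) : ℝ := ∫ x, (deriv f x ^ 2 + V x * f x ^ 2)

variable {V : ℝ → ℝ}

lemma integrable_schrodingerForm (hloc : LocallyIntegrable V) {f : ℝ → ℝ} (hf : ContDiff ℝ 1 f)
    (hfc : HasCompactSupport f) : Integrable (fun x => deriv f x ^ 2 + V x * f x ^ 2) :=
  (integrable_sq_of_hasCompactSupport (hf.continuous_deriv le_rfl) hfc.deriv).add
    (integrable_mul_sq_of_hasCompactSupport hloc hf.continuous hfc)

lemma schrodingerForm_nonneg (hpos : ∀ᵐ x, 0 ≤ V x) (f : ℝ → ℝ) : 0 ≤ schrodingerForm V f :=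
  integral_nonneg_of_ae <| by
    filter_upwards [hpos] with x hx
    exact add_nonneg (sq_nonneg _) (mul_nonneg hx (sq_nonneg _))

lemma rayleigh_nonneg (hpos : ∀ᵐ x, 0 ≤ V x) (f : ℝ → ℝ) : 0 ≤ rayleigh V f :=
  div_nonneg (schrodingerForm_nonneg hpos f) (integral_nonneg fun _ => sq_nonneg _)

lemma schrodingerForm_const_mul (c : ℝ) (f : ℝ → ℝ) :
    schrodingerForm V (fun x => c * f x) = c ^ 2 * schrodingerForm V f := by
  rw [schrodingerForm, schrodingerForm, ← integral_const_mul]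
  congr with x
  rw [deriv_const_mul_field]
  ring

lemma integral_sq_deriv_le_schrodingerForm (hloc : LocallyIntegrable V) (hpos : ∀ᵐ x, 0 ≤ V x)
    {f : ℝ → ℝ} (hf : ContDiff ℝ 1 f) (hfc : HasCompactSupport f) :
    ∫ x, deriv f x ^ 2 ≤ schrodingerForm V f := by
  refine integral_mono_ae
    (integrable_sq_of_hasCompactSupport (hf.continuous_deriv le_rfl) hfc.deriv)
    (integrable_schrodingerForm hloc hf hfc) ?_
  filter_upwards [hpos] with x hx
  exact le_add_of_nonneg_right (mul_nonneg hx (sq_nonneg _))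

lemma schrodingerForm_softThreshold_le (hloc : LocallyIntegrable V) (hpos : ∀ᵐ x, 0 ≤ V x)
    {φ : ContDiffBump (0 : ℝ)} {w f : ℝ → ℝ} (hw : ContDiff ℝ 1 w) (hwc : HasCompactSupport w)
    (hw₁ : ∀ x, w x ∈ Icc (0 : ℝ) 1) (hf : ContDiff ℝ 1 f) (hfc : HasCompactSupport f) :
    schrodingerForm V (softThreshold φ w f) ≤
      (1 + φ.rOut) * (schrodingerForm V f + 4 * φ.rOut * ∫ x, deriv w x ^ 2) := by
  have hgc : HasCompactSupport (softThreshold φ w f) :=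
    hfc.of_isClosed_subset (isClosed_tsupport _) (tsupport_softThreshold_subset hw₁)
  have hfE := integrable_schrodingerForm hloc hf hfc
  have hw₂ := (integrable_sq_of_hasCompactSupport (μ := volume)
    (hw.continuous_deriv le_rfl) hwc.deriv).const_mul (4 * φ.rOut)
  rw [schrodingerForm, schrodingerForm, ← integral_const_mul, ← integral_add hfE hw₂,
    ← integral_const_mul]
  refine integral_mono_ae (integrable_schrodingerForm hloc (contDiff_softThreshold hw hf) hgc)
    ((hfE.add hw₂).const_mul _) ?_
  filter_upwards [hpos] with x hx
  have hr := φ.rOut_pos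
  have hderiv := deriv_softThreshold_sq_le (φ := φ) hw hw₁ hf x
  have hsq : V x * softThreshold φ w f x ^ 2 ≤ V x * f x ^ 2 :=
    mul_le_mul_of_nonneg_left (sq_le_sq.2 (abs_softThreshold_le (hw₁ x))) hx
  have hVf : 0 ≤ φ.rOut * (V x * f x ^ 2) := by positivity
  linarith

lemma lambdaV_anti (V : ℝ → ℝ) : Antitone (lambdaV V) := by
  intro S T hST
  refine sInf_le_sInf ?_
  rintro e ⟨f, ⟨hf, hf₀, hfc, hfS⟩, rfl⟩
  exact ⟨f, ⟨hf, hf₀, hfc, hfS.trans hST⟩, rfl⟩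

lemma interior_nonempty_of_lambdaV_lt_top {S : Set ℝ} (h : lambdaV V S < ⊤) :
    (interior S).Nonempty := by
  obtain ⟨_, ⟨f, ⟨hf, hf₀, -, hfS⟩, rfl⟩, -⟩ := sInf_lt_iff.1 h
  exact (Function.support_nonempty_iff.2 hf₀).mono <|
    interior_maximal ((subset_tsupport f).trans hfS) hf.continuous.isOpen_support

lemma TestFor.integral_sq_pos {S : Set ℝ} {f : ℝ → ℝ} (h : TestFor S f) : 0 < ∫ x, f x ^ 2 := by
  obtain ⟨hf, hf₀, hfc, -⟩ := h
  obtain ⟨x, hx⟩ := Function.ne_iff.1 hf₀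
  have hf' := hf.continuous
  exact (by fun_prop : Continuous fun x => f x ^ 2).integral_pos_of_hasCompactSupport_nonneg_nonzero
    (hfc.comp_left (g := fun y => y ^ 2) (zero_pow two_ne_zero)) (fun _ => sq_nonneg _)
    (pow_ne_zero 2 hx)

lemma exists_testFor_schrodingerForm_lt_of_lambdaV_lt (hpos : ∀ᵐ x, 0 ≤ V x) {S : Set ℝ}
    {c : NNReal} (h : lambdaV V S < c) :
    ∃ f, TestFor S f ∧ ∫ x, f x ^ 2 = 1 ∧ schrodingerForm V f < c := by
  obtain ⟨_, ⟨f, hfS, rfl⟩, hlt⟩ := sInf_lt_iff.1 h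
  set N := ∫ x, f x ^ 2 with hN
  have hN₀ : 0 < N := hfS.integral_sq_pos
  have hc : (√N)⁻¹ ≠ 0 := (inv_pos.2 (Real.sqrt_pos.2 hN₀)).ne'
  have hc₂ : (√N)⁻¹ ^ 2 = N⁻¹ := by rw [inv_pow, Real.sq_sqrt hN₀.le]
  obtain ⟨hf, hf₀, hfc, hfT⟩ := hfS
  refine ⟨fun x => (√N)⁻¹ * f x, ⟨contDiff_const.mul hf, ?_, hfc.mul_left,
    tsupport_mul_subset_right.trans hfT⟩, ?_, ?_⟩
  · simpa [funext_iff, hc] using hf₀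
  · simp only [mul_pow, integral_const_mul, hc₂, ← hN, inv_mul_cancel₀ hN₀.ne']
  · rw [ENNReal.ofReal_lt_coe_iff (rayleigh_nonneg hpos f)] at hlt
    rwa [schrodingerForm_const_mul, hc₂, inv_mul_eq_div]

lemma mul_integral_sq_le_schrodingerForm (hpos : ∀ᵐ x, 0 ≤ V x) {S : Set ℝ} {c : NNReal}
    (h : c ≤ lambdaV V S) {f : ℝ → ℝ} (hf : ContDiff ℝ 1 f) (hfc : HasCompactSupport f)
    (hfS : tsupport f ⊆ S) : c * ∫ x, f x ^ 2 ≤ schrodingerForm V f := by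
  obtain rfl | hf₀ := eq_or_ne f 0
  · simpa using schrodingerForm_nonneg hpos 0
  have hfT : TestFor S f := ⟨hf, hf₀, hfc, hfS⟩
  have hc : (c : ℝ≥0∞) ≤ ENNReal.ofReal (rayleigh V f) := h.trans (sInf_le ⟨f, hfT, rfl⟩)
  rw [← ENNReal.ofReal_coe_nnreal, ENNReal.ofReal_le_ofReal_iff (rayleigh_nonneg hpos f)] at hc
  exact (le_div_iff₀ hfT.integral_sq_pos).1 hc

lemma exists_pos_perturbation_lt {c M : ℝ} (hcM : c < M) (K L : ℝ) :
    ∃ r > 0, (1 + r) * ((1 + r) * (c + 4 * r * K) + M * (4 * r * L)) < M := by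
  have hcont : Continuous fun r : ℝ =>
      (1 + r) * ((1 + r) * (c + 4 * r * K) + M * (4 * r * L)) := by fun_prop
  have hlim := hcont.tendsto 0
  simp only [add_zero, one_mul, mul_zero, zero_mul] at hlim
  obtain ⟨r, hr, hr₀⟩ := (((hlim.eventually_lt_const hcM).filter_mono
    nhdsWithin_le_nhds).and (self_mem_nhdsWithin (s := Ioi 0))).exists
  exact ⟨r, hr₀, hr⟩

lemma exists_pos_le_one_and_mul_le (c : ℝ) {ε : ℝ} (hε : 0 < ε) :
    ∃ δ > 0, δ ≤ 1 ∧ δ * c ≤ ε := by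
  refine ⟨min 1 (ε / (|c| + 1)), by positivity, min_le_left _ _, ?_⟩
  calc min 1 (ε / (|c| + 1)) * c ≤ min 1 (ε / (|c| + 1)) * (|c| + 1) := by
        gcongr
        exact (le_abs_self c).trans (lt_add_one _).le
    _ ≤ ε / (|c| + 1) * (|c| + 1) := by
        gcongr
        exact min_le_right _ _
    _ = ε := div_mul_cancel₀ _ (by positivity)

lemma le_of_mul_integral_sq_le_schrodingerForm_softThreshold (hloc : LocallyIntegrable V)
    (hpos : ∀ᵐ x, 0 ≤ V x) {φ : ContDiffBump (0 : ℝ)} {w f : ℝ → ℝ} (hw : ContDiff ℝ 1 w)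
    (hwc : HasCompactSupport w) (hw₁ : ∀ x, w x ∈ Icc (0 : ℝ) 1) (hf : ContDiff ℝ 1 f)
    (hfc : HasCompactSupport f) (hN : ∫ x, f x ^ 2 = 1) {c M : ℝ} (hM : 0 ≤ M)
    (hE : schrodingerForm V f ≤ c)
    (h : M * ∫ x, softThreshold φ w f x ^ 2 ≤ schrodingerForm V (softThreshold φ w f)) :
    M ≤ (1 + φ.rOut) * ((1 + φ.rOut) * (c + 4 * φ.rOut * ∫ x, deriv w x ^ 2) +
      M * (4 * φ.rOut * ∫ x, w x ^ 2)) := by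
  have hr := φ.rOut_pos
  have hNg := integral_sq_le_softThreshold (φ := φ) hw hwc hw₁ hf hfc
  have hEg := schrodingerForm_softThreshold_le (φ := φ) hloc hpos hw hwc hw₁ hf hfc
  calc M = M * ∫ x, f x ^ 2 := by rw [hN, mul_one]
    _ ≤ M * ((1 + φ.rOut) * ((∫ x, softThreshold φ w f x ^ 2) + 4 * φ.rOut * ∫ x, w x ^ 2)) := by
      gcongr
    _ = (1 + φ.rOut) * (M * (∫ x, softThreshold φ w f x ^ 2) +
        M * (4 * φ.rOut * ∫ x, w x ^ 2)) := by ring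
    _ ≤ (1 + φ.rOut) * ((1 + φ.rOut) * (c + 4 * φ.rOut * ∫ x, deriv w x ^ 2) +
        M * (4 * φ.rOut * ∫ x, w x ^ 2)) := by
      refine mul_le_mul_of_nonneg_left (add_le_add_left (h.trans (hEg.trans ?_)) _) (by positivity)
      gcongr

lemma sq_le_mul_schrodingerForm_of_mem_ball (hloc : LocallyIntegrable V) (hpos : ∀ᵐ x, 0 ≤ V x)
    {f : ℝ → ℝ} (hf : ContDiff ℝ 1 f) (hfc : HasCompactSupport f) {a p x δ : ℝ} (hp : f p = 0)
    (hpa : |p - a| ≤ δ) (hx : x ∈ Metric.ball a δ) : f x ^ 2 ≤ 2 * δ * schrodingerForm V f := by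
  have hxp : |x - p| ≤ 2 * δ := by
    rw [Metric.mem_ball, Real.dist_eq] at hx
    linarith [abs_sub_le x a p, abs_sub_comm a p]
  calc f x ^ 2 = (f x - f p) ^ 2 := by rw [hp, sub_zero]
    _ ≤ |x - p| * ∫ t, deriv f t ^ 2 := sq_sub_le_abs_sub_mul_integral_sq_deriv hf
        (integrable_sq_of_hasCompactSupport (hf.continuous_deriv le_rfl) hfc.deriv) p x
    _ ≤ 2 * δ * schrodingerForm V f := mul_le_mul hxp
        (integral_sq_deriv_le_schrodingerForm hloc hpos hf hfc)
        (integral_nonneg fun _ => sq_nonneg _) ((abs_nonneg _).trans hxp)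

lemma exists_forall_lt_lambdaV_of_sdiff_ball_subset (hloc : LocallyIntegrable V)
    (hpos : ∀ᵐ x, 0 ≤ V x) {S : Set ℝ} {e : ℝ≥0∞} (he : e < lambdaV V S) (a : ℝ) :
    ∃ δ > 0, ∀ (T : Set ℝ) (p : ℝ), p ∉ T → |p - a| ≤ δ → T \ Metric.ball a δ ⊆ S →
      e < lambdaV V T := by
  obtain ⟨c, hec, hcS⟩ := ENNReal.lt_iff_exists_nnreal_btwn.1 he
  obtain ⟨M, hcM, hMS⟩ := ENNReal.lt_iff_exists_nnreal_btwn.1 hcS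
  let w : ContDiffBump a := ⟨1, 2, one_pos, one_lt_two⟩
  have hw₁ : ∀ x, w x ∈ Icc (0 : ℝ) 1 := fun x => ⟨w.nonneg, w.le_one⟩
  obtain ⟨r, hr, hrM⟩ := exists_pos_perturbation_lt
    (NNReal.coe_lt_coe.2 (ENNReal.coe_lt_coe.1 hcM)) (∫ x, deriv w x ^ 2) (∫ x, w x ^ 2)
  let φ : ContDiffBump (0 : ℝ) := ⟨r / 2, r, half_pos hr, half_lt_self hr⟩
  obtain ⟨δ, hδ, hδ₁, hδr⟩ :=
    exists_pos_le_one_and_mul_le (2 * c : ℝ) (by positivity : 0 < (r / 2) ^ 2)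
  refine ⟨δ, hδ, fun T p hpT hpa hTS => ?_⟩
  by_contra! hT
  obtain ⟨f, ⟨hf, -, hfc, hfT⟩, hN, hE⟩ :=
    exists_testFor_schrodingerForm_lt_of_lambdaV_lt hpos (hT.trans_lt hec)
  have hfp : f p = 0 := image_eq_zero_of_notMem_tsupport fun h => hpT (hfT h)
  have hcut : Disjoint (tsupport (softThreshold φ w f)) (Metric.ball a δ) :=
    disjoint_tsupport_softThreshold Metric.isOpen_ball
      (fun x hx => w.one_of_mem_closedBall ((Metric.mem_ball.1 hx).le.trans hδ₁))
      fun x hx => abs_le_of_sq_le_sq ((sq_le_mul_schrodingerForm_of_mem_ball hloc hpos hf hfc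
        hfp hpa hx).trans (le_trans (by rw [mul_comm 2, mul_assoc]; gcongr) hδr)) φ.rIn_pos.le
  have hgf : tsupport (softThreshold φ w f) ⊆ tsupport f := tsupport_softThreshold_subset hw₁
  refine hrM.not_ge (le_of_mul_integral_sq_le_schrodingerForm_softThreshold (φ := φ) hloc hpos
    w.contDiff w.hasCompactSupport hw₁ hf hfc hN M.coe_nonneg hE.le ?_)
  exact mul_integral_sq_le_schrodingerForm hpos hMS.le (contDiff_softThreshold w.contDiff hf)
    (hfc.of_isClosed_subset (isClosed_tsupport _) hgf)
    ((subset_sdiff.2 ⟨hgf.trans hfT, hcut⟩).trans hTS)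

lemma exists_forall_lt_lambdaV_of_lt_SigmaV {e : ℝ≥0∞} (h : e < SigmaV V) :
    ∃ R, ∀ S : Set ℝ, (∀ x ∈ S, R ≤ |x|) → e < lambdaV V S := by
  obtain ⟨R, hR⟩ := lt_iSup_iff.1 h
  obtain ⟨-, he⟩ := lt_iSup_iff.1 hR
  exact ⟨R, fun S hS => he.trans_le (lambdaV_anti V hS)⟩

end GroundState

section RealIcc

/-- The closed interval of reals between two extended real endpoints. Every closed interval of `ℝ`,
bounded or not, has this form, and the pairs of endpoints range over a compact space. -/
def realIcc (a b : EReal) : Set ℝ := Real.toEReal ⁻¹' Icc a b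

lemma isClosed_realIcc (a b : EReal) : IsClosed (realIcc a b) :=
  isClosed_Icc.preimage continuous_coe_real_ereal

lemma ordConnected_realIcc (a b : EReal) : (realIcc a b).OrdConnected :=
  ordConnected_Icc.preimage_mono EReal.coe_strictMono.monotone

lemma realIcc_subset_realIcc {a a' b b' : EReal} (ha : a' ≤ a) (hb : b ≤ b') :
    realIcc a b ⊆ realIcc a' b' :=
  preimage_mono (Icc_subset_Icc ha hb)

lemma realIcc_subset_upperBounds {a b a' b' : EReal} (h : b ≤ a') :
    realIcc a' b' ⊆ upperBounds (realIcc a b) :=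
  fun _ hy _ hx => EReal.coe_le_coe_iff.1 (hx.2.trans (h.trans hy.1))

variable {V : ℝ → ℝ} {e : ℝ≥0∞} {a b : EReal}

lemma exists_Ici_mem_nhds_lt_lambdaV_realIcc (hloc : LocallyIntegrable V) (hpos : ∀ᵐ x, 0 ≤ V x)
    (he : e < lambdaV V (realIcc a b)) (he_ess : e < SigmaV V) :
    ∃ a', Ici a' ∈ 𝓝 a ∧ e < lambdaV V (realIcc a' b) := by
  induction a with
  | bot => exact ⟨⊥, by simp, he⟩
  | top =>
    obtain ⟨R, hR⟩ := exists_forall_lt_lambdaV_of_lt_SigmaV he_ess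
    exact ⟨R, Ici_mem_nhds (EReal.coe_lt_top R),
      hR _ fun x hx => (EReal.coe_le_coe_iff.1 hx.1).trans (le_abs_self x)⟩
  | coe a =>
    obtain ⟨δ, hδ, h⟩ := exists_forall_lt_lambdaV_of_sdiff_ball_subset hloc hpos he a
    refine ⟨(a - δ / 2 : ℝ), Ici_mem_nhds (EReal.coe_lt_coe_iff.2 (by linarith)),
      h _ (a - δ) (fun hp => ?_) (by simp [abs_of_pos hδ]) ?_⟩
    · linarith [EReal.coe_le_coe_iff.1 hp.1]
    · rintro x ⟨⟨hax, hxb⟩, hx⟩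
      refine ⟨EReal.coe_le_coe_iff.2 ?_, hxb⟩
      by_contra! hxa
      rw [Real.ball_eq_Ioo] at hx
      exact hx ⟨by linarith [EReal.coe_le_coe_iff.1 hax], by linarith⟩

lemma exists_Iic_mem_nhds_lt_lambdaV_realIcc (hloc : LocallyIntegrable V) (hpos : ∀ᵐ x, 0 ≤ V x)
    (he : e < lambdaV V (realIcc a b)) (he_ess : e < SigmaV V) :
    ∃ b', Iic b' ∈ 𝓝 b ∧ e < lambdaV V (realIcc a b') := by
  induction b with
  | bot =>
    obtain ⟨R, hR⟩ := exists_forall_lt_lambdaV_of_lt_SigmaV he_ess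
    exact ⟨(-R : ℝ), Iic_mem_nhds (EReal.bot_lt_coe _),
      hR _ fun x hx => (le_neg.1 (EReal.coe_le_coe_iff.1 hx.2)).trans (neg_le_abs x)⟩
  | top => exact ⟨⊤, by simp, he⟩
  | coe b =>
    obtain ⟨δ, hδ, h⟩ := exists_forall_lt_lambdaV_of_sdiff_ball_subset hloc hpos he b
    refine ⟨(b + δ / 2 : ℝ), Iic_mem_nhds (EReal.coe_lt_coe_iff.2 (by linarith)),
      h _ (b + δ) (fun hp => ?_) (by simp [abs_of_pos hδ]) ?_⟩
    · linarith [EReal.coe_le_coe_iff.1 hp.2]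
    · rintro x ⟨⟨hax, hxb⟩, hx⟩
      refine ⟨hax, EReal.coe_le_coe_iff.2 ?_⟩
      by_contra! hbx
      rw [Real.ball_eq_Ioo] at hx
      exact hx ⟨by linarith, by linarith [EReal.coe_le_coe_iff.1 hxb]⟩

lemma lowerSemicontinuous_min_lambdaV_SigmaV (hloc : LocallyIntegrable V)
    (hpos : ∀ᵐ x, 0 ≤ V x) : LowerSemicontinuous
      fun c : EReal × EReal => min (lambdaV V (realIcc c.1 c.2)) (SigmaV V) := by
  rintro ⟨a, b⟩ e he
  obtain ⟨hab, he_ess⟩ := lt_min_iff.1 he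
  obtain ⟨a', ha', hab'⟩ := exists_Ici_mem_nhds_lt_lambdaV_realIcc hloc hpos hab he_ess
  obtain ⟨b', hb', hab''⟩ := exists_Iic_mem_nhds_lt_lambdaV_realIcc hloc hpos hab' he_ess
  filter_upwards [prod_mem_nhds ha' hb'] with c hc
  exact lt_min (hab''.trans_le (lambdaV_anti V (realIcc_subset_realIcc hc.1 hc.2))) he_ess

end RealIcc

section Partitions

lemma IsPartitionR.optEnergyR_le_energyR {V : ℝ → ℝ} {k : ℕ} {G : Fin k → Set ℝ}
    (hG : IsPartitionR k G) : optEnergyR V k ≤ energyR V G :=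
  iInf_le_of_le ⟨G, hG⟩ le_rfl

/-- The families of endpoint pairs whose intervals `realIcc` do not overlap: of any two, one ends
before the other starts. Empty and one-point intervals are allowed, so that this set is closed. -/
def nonOverlapping (ι : Type*) : Set (ι → EReal × EReal) :=
  {c | Pairwise fun i j => (c i).2 ≤ (c j).1 ∨ (c j).2 ≤ (c i).1}

lemma isClosed_nonOverlapping (ι : Type*) : IsClosed (nonOverlapping ι) := by
  simp only [nonOverlapping, Pairwise, ofPred_forall]
  exact isClosed_iInter fun i => isClosed_iInter fun j => isClosed_iInter fun _ =>
    (isClosed_le (f := fun c : ι → EReal × EReal => (c i).2) (g := fun c => (c j).1)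
      (by fun_prop) (by fun_prop)).union
    (isClosed_le (f := fun c : ι → EReal × EReal => (c j).2) (g := fun c => (c i).1)
      (by fun_prop) (by fun_prop))

lemma isPartitionR_realIcc {V : ℝ → ℝ} {k : ℕ} {c : Fin k → EReal × EReal}
    (hc : c ∈ nonOverlapping (Fin k)) (h : ∀ i, lambdaV V (realIcc (c i).1 (c i).2) < ⊤) :
    IsPartitionR k fun i => realIcc (c i).1 (c i).2 := by
  have hint := fun i => interior_nonempty_of_lambdaV_lt_top (h i)
  refine ⟨fun i => isClosed_realIcc _ _, fun i => ⟨(hint i).mono interior_subset,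
    (ordConnected_realIcc _ _).isPreconnected⟩, hint, fun i j hij => ?_⟩
  obtain hle | hle := hc hij
  · exact inter_subset_frontier_of_subset_upperBounds (realIcc_subset_upperBounds hle)
  · rw [inter_comm, inter_comm (frontier _)]
    exact inter_subset_frontier_of_subset_upperBounds (realIcc_subset_upperBounds hle)

/-- The infimum and supremum of a set of reals in `EReal`, i.e. the endpoints of the smallest
`realIcc` containing it. -/
noncomputable def hullEndpoints (A : Set ℝ) : EReal × EReal :=
  (sInf (Real.toEReal '' A), sSup (Real.toEReal '' A))

lemma subset_realIcc_hullEndpoints (A : Set ℝ) :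
    A ⊆ realIcc (hullEndpoints A).1 (hullEndpoints A).2 :=
  fun _ hx => ⟨sInf_le (mem_image_of_mem _ hx), le_sSup (mem_image_of_mem _ hx)⟩

lemma hullEndpoints_snd_le_fst {A B : Set ℝ} (h : B ⊆ upperBounds A) :
    (hullEndpoints A).2 ≤ (hullEndpoints B).1 := by
  refine sSup_le ?_
  rintro _ ⟨x, hx, rfl⟩
  refine le_sInf ?_
  rintro _ ⟨y, hy, rfl⟩
  exact EReal.coe_le_coe_iff.2 (h hy hx)

lemma IsPartitionR.hullEndpoints_mem_nonOverlapping {k : ℕ} {G : Fin k → Set ℝ}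
    (hG : IsPartitionR k G) : (fun i => hullEndpoints (G i)) ∈ nonOverlapping (Fin k) := by
  obtain ⟨-, hconn, hint, hfr⟩ := hG
  intro i j hij
  have hdisj : Disjoint (interior (G i)) (G j) := disjoint_left.2 fun x hxi hxj =>
    (hfr i j hij ⟨interior_subset hxi, hxj⟩).1.2 hxi
  obtain h | h := subset_upperBounds_or_subset_lowerBounds_of_disjoint_interior
    (hconn i).isPreconnected.ordConnected (hconn j).isPreconnected.ordConnected hdisj (hint i)
  · exact Or.inl (hullEndpoints_snd_le_fst h)
  · exact Or.inr (hullEndpoints_snd_le_fst fun _ hx _ hy => h hy hx)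

lemma nonOverlapping_nonempty (ι : Type*) : (nonOverlapping ι).Nonempty :=
  ⟨fun _ => ⊥, fun _ _ _ => Or.inl le_rfl⟩

/-- The energy of the family of intervals `realIcc` with endpoints `c`, each ground state energy
being truncated at `Σ_V`. The truncation makes it lower semicontinuous also where an endpoint
escapes to infinity. -/
noncomputable def truncatedEnergy (V : ℝ → ℝ) {ι : Type*} (c : ι → EReal × EReal) : ℝ≥0∞ :=
  ⨆ i, min (lambdaV V (realIcc (c i).1 (c i).2)) (SigmaV V)

lemma lowerSemicontinuous_truncatedEnergy {V : ℝ → ℝ} (hloc : LocallyIntegrable V)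
    (hpos : ∀ᵐ x, 0 ≤ V x) (ι : Type*) :
    LowerSemicontinuous (truncatedEnergy V : (ι → EReal × EReal) → ℝ≥0∞) :=
  lowerSemicontinuous_iSup fun i =>
    (lowerSemicontinuous_min_lambdaV_SigmaV hloc hpos).comp (continuous_apply i)

lemma truncatedEnergy_hullEndpoints_le (V : ℝ → ℝ) {k : ℕ} (G : Fin k → Set ℝ) :
    truncatedEnergy V (fun i => hullEndpoints (G i)) ≤ energyR V G :=
  iSup_mono fun i => (min_le_left _ _).trans (lambdaV_anti V (subset_realIcc_hullEndpoints (G i)))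

lemma lambdaV_le_of_truncatedEnergy_le {V : ℝ → ℝ} {ι : Type*} {c : ι → EReal × EReal}
    {e : ℝ≥0∞} (h : truncatedEnergy V c ≤ e) (he : e < SigmaV V) (i : ι) :
    lambdaV V (realIcc (c i).1 (c i).2) ≤ e :=
  (min_le_iff.1 ((le_iSup _ i).trans h)).resolve_right he.not_ge

end Partitions

/-- **Theorem 1.3 for `G = ℝ`.** If `Δ*_k(ℝ) < Σ_V` then a spectral minimal `k`-partition
of `ℝ` exists. -/
theorem exists_minimal_partition (V : ℝ → ℝ) (hmeas : Measurable V)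
    (hloc : LocallyIntegrable V) (hpos : ∀ᵐ x ∂(volume : Measure ℝ), 0 ≤ V x)
    (k : ℕ) (hk : 1 ≤ k) (hlt : optEnergyR V k < SigmaV V) :
    ∃ G : Fin k → Set ℝ, IsPartitionR k G ∧ energyR V G = optEnergyR V k := by
  obtain ⟨c, hc, hmin⟩ := LowerSemicontinuousOn.exists_isMinOn (nonOverlapping_nonempty (Fin k))
    (isClosed_nonOverlapping (Fin k)).isCompact
    ((lowerSemicontinuous_truncatedEnergy hloc hpos (Fin k)).lowerSemicontinuousOn _)
  have hc_le : truncatedEnergy V c ≤ optEnergyR V k := le_iInf fun ⟨G, hG⟩ =>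
    (hmin hG.hullEndpoints_mem_nonOverlapping).trans (truncatedEnergy_hullEndpoints_le V G)
  have hlambda := lambdaV_le_of_truncatedEnergy_le hc_le hlt
  have hpart := isPartitionR_realIcc hc fun i => (hlambda i).trans_lt (hlt.trans_le le_top)
  exact ⟨_, hpart, le_antisymm (iSup_le hlambda) hpart.optEnergyR_le_energyR⟩
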